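/- Let F be a homogeneous Farey recursive function with values in ℂ, let β_0 and α be normalised pairs which are Farey neighbours, and for n ≥ 0 set β_n = β_0 + n·α (componentwise). Let κ ∈ ℂ with κ ≠ 0 and κ² = F(α)² − 4, and set m = −F(α). Then for every integer n ≥ 0, F(β_n) = [ (2F(β_1) − F(β_0)(m − κ))·(m + κ)^n + (F(β_0)(m + κ) − 2F(β_1))·(m − κ)^n ] / (2^{n+1} κ). -/

import Mathlib

/-- A normalised pair `(p, q) ∈ ℤ × ℤ` representing an extended rational: `gcd(p,q) = 1`
and either `q > 0`, or `q = 0` and `p = 1` (representing `∞`). -/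
def Normalised (x : ℤ × ℤ) : Prop :=
  Int.gcd x.1 x.2 = 1 ∧ (0 < x.2 ∨ (x.2 = 0 ∧ x.1 = 1))

/-- Two pairs `(p,q)` and `(r,s)` are Farey neighbours if `|ps − qr| = 1`.
Their mediant is the componentwise sum `(p+r, q+s)`. -/
def FareyNbr (x y : ℤ × ℤ) : Prop := (x.1 * y.2 - x.2 * y.1).natAbs = 1

/-- `F` is a homogeneous Farey recursive function:
`F((γ ⊕ α) ⊕ α) = −F(γ) − F(α)·F(γ ⊕ α)` for Farey neighbours `γ, α`. -/
def IsHomFareyRecursive (F : ℤ × ℤ → ℂ) : Prop :=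
  ∀ γ α : ℤ × ℤ, Normalised γ → Normalised α → FareyNbr γ α →
    F (γ + α + α) = -F γ - F α * F (γ + α)

/-- The mediant of two Farey neighbours is a Farey neighbour of the second. -/
theorem FareyNbr.add_left {γ α : ℤ × ℤ} (h : FareyNbr γ α) : FareyNbr (γ + α) α := by
  unfold FareyNbr at *
  rw [← h]
  congr 1
  simp only [Prod.fst_add, Prod.snd_add]
  ring

/-- The mediant of two normalised Farey neighbours is normalised. -/
theorem Normalised.add {γ α : ℤ × ℤ} (hγ : Normalised γ) (hα : Normalised α)
    (h : FareyNbr γ α) : Normalised (γ + α) := by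
  refine ⟨?_, ?_⟩
  · have hdet := h.add_left
    rw [FareyNbr, Int.natAbs_eq_iff] at hdet
    rw [← Int.isCoprime_iff_gcd_eq_one]
    rcases hdet with hdet | hdet <;> push_cast at hdet
    · exact ⟨α.2, -α.1, by linear_combination hdet⟩
    · exact ⟨-α.2, α.1, by linear_combination -hdet⟩
  · left
    rw [Prod.snd_add]
    rcases hγ.2 with h1 | ⟨h1, -⟩ <;> rcases hα.2 with h2 | ⟨h2, -⟩
    · omega
    · omega
    · omega
    · simp [FareyNbr, h1, h2] at h

/-- Every term of the sequence `γ + n • α` is normalised and a Farey neighbour of `α`. -/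
theorem Normalised.add_nsmul {γ α : ℤ × ℤ} (hγ : Normalised γ) (hα : Normalised α)
    (h : FareyNbr γ α) (n : ℕ) : Normalised (γ + n • α) ∧ FareyNbr (γ + n • α) α := by
  induction n with
  | zero => simpa using ⟨hγ, h⟩
  | succ n ih =>
    rw [succ_nsmul, ← add_assoc]
    exact ⟨ih.1.add hα ih.2, ih.2.add_left⟩

/-- Closed form for a sequence with `x (n + 2) = m * x (n + 1) - x n`, where `κ ^ 2 = m ^ 2 - 4`
is the discriminant of the characteristic polynomial. -/
theorem closed_form_of_linear_recurrence {K : Type*} [Field K] [NeZero (2 : K)] {x : ℕ → K}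
    {m κ : K} (hκ : κ ≠ 0) (hκ2 : κ ^ 2 = m ^ 2 - 4)
    (hx : ∀ n, x (n + 2) = m * x (n + 1) - x n) (n : ℕ) :
    x n = ((2 * x 1 - x 0 * (m - κ)) * (m + κ) ^ n +
      (x 0 * (m + κ) - 2 * x 1) * (m - κ) ^ n) / (2 ^ (n + 1) * κ) := by
  have h2 : (2 : K) ≠ 0 := two_ne_zero
  rw [eq_div_iff (mul_ne_zero (pow_ne_zero _ h2) hκ)]
  induction n using Nat.twoStepInduction with
  | zero => ring
  | one => ring
  | more n ih0 ih1 =>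
    rw [hx]
    linear_combination 2 * m * ih1 - 4 * ih0 -
      ((2 * x 1 - x 0 * (m - κ)) * (m + κ) ^ n +
        (x 0 * (m + κ) - 2 * x 1) * (m - κ) ^ n) * hκ2

/-- Closed form for a homogeneous Farey recursive function along the constant-difference
sequence `β_n = β_0 + n·α`, where `κ² = F(α)² − 4`, `κ ≠ 0`, and `m = −F(α)`:
`F(β_n) = [(2F(β_1) − F(β_0)(m − κ))(m + κ)^n + (F(β_0)(m + κ) − 2F(β_1))(m − κ)^n]/(2^{n+1}κ)`. -/
theorem hom_farey_recursive_closed_form (F : ℤ × ℤ → ℂ) (hF : IsHomFareyRecursive F)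
    (β₀ α : ℤ × ℤ) (hβ₀ : Normalised β₀) (hα : Normalised α) (hnbr : FareyNbr β₀ α)
    (β : ℕ → ℤ × ℤ) (hβ : ∀ n : ℕ, β n = β₀ + n • α)
    (κ m : ℂ) (hκ : κ ≠ 0) (hκ2 : κ ^ 2 = F α ^ 2 - 4) (hm : m = -F α) :
    ∀ n : ℕ, F (β n) =
      ((2 * F (β 1) - F (β 0) * (m - κ)) * (m + κ) ^ n +
        (F (β 0) * (m + κ) - 2 * F (β 1)) * (m - κ) ^ n) / (2 ^ (n + 1) * κ) := by
  subst hm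
  refine closed_form_of_linear_recurrence (x := fun n => F (β n)) hκ (by rw [hκ2]; ring) ?_
  intro n
  obtain ⟨hn, hn'⟩ := hβ₀.add_nsmul hα hnbr n
  have hrec := hF _ _ hn hα hn'
  simp only [hβ, succ_nsmul, ← add_assoc] at hrec ⊢
  rw [hrec]
  ring
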